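/- arXiv:1111.3848 — 6 statements merged into one kernel-verified Lean document; each statement's English description precedes it below -/
import Mathlib

section
/- Let a, b be positive real numbers with a ≠ b, let λ ∈ ℂ, and let n, v ∈ ℕ with n ≥ 1 and v ≥ 1. Then S(n,v;a,b;λ) = Σ_{j=0}^{n−1} binom(n−1,j)·S(j,v−1;a,b;λ)·(λ·(ln b)^{n−j} − (ln a)^{n−j}). -/
open Finset

/-- The generalized λ-Stirling type numbers of the second kind. -/
noncomputable def genStirling (a b : ℝ) (lam : ℂ) (n v : ℕ) : ℂ :=
  (1 / (v.factorial : ℂ)) * ∑ j ∈ range (v + 1),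
    (-1) ^ j * (v.choose j : ℂ) * lam ^ (v - j) *
      ((j : ℂ) * (Real.log a : ℂ) + ((v - j : ℕ) : ℂ) * (Real.log b : ℂ)) ^ n

theorem genStirling_succ_aux (A B lam : ℂ) (m w : ℕ) :
    (∑ k ∈ range (w + 2), (-1) ^ k * ((w + 1).choose k : ℂ) * lam ^ (w + 1 - k) *
      ((k : ℂ) * A + ((w + 1 - k : ℕ) : ℂ) * B) ^ (m + 1)) =
    ((w : ℂ) + 1) * ∑ i ∈ range (w + 1), (-1) ^ i * (w.choose i : ℂ) * lam ^ (w - i) *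
      (lam * B * (((i : ℂ) * A + ((w - i : ℕ) : ℂ) * B) + B) ^ m
        - A * (((i : ℂ) * A + ((w - i : ℕ) : ℂ) * B) + A) ^ m) := by
  have h1 : (∑ k ∈ range (w + 2), (-1) ^ k * ((w + 1).choose k : ℂ) * lam ^ (w + 1 - k) *
      ((k : ℂ) * A + ((w + 1 - k : ℕ) : ℂ) * B) ^ (m + 1)) =
      (∑ k ∈ range (w + 2), (-1) ^ k * ((w + 1).choose k : ℂ) * lam ^ (w + 1 - k) *
        ((k : ℂ) * A) * ((k : ℂ) * A + ((w + 1 - k : ℕ) : ℂ) * B) ^ m) +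
      (∑ k ∈ range (w + 2), (-1) ^ k * ((w + 1).choose k : ℂ) * lam ^ (w + 1 - k) *
        (((w + 1 - k : ℕ) : ℂ) * B) * ((k : ℂ) * A + ((w + 1 - k : ℕ) : ℂ) * B) ^ m) := by
    rw [← sum_add_distrib]
    exact sum_congr rfl fun k _ => by ring
  rw [h1, sum_range_succ', sum_range_succ _ (w + 1)]
  simp only [Nat.sub_self, Nat.cast_zero, zero_mul, mul_zero, add_zero]
  rw [← sum_add_distrib, mul_sum]
  refine sum_congr rfl fun i hi => ?_
  have hiw : i ≤ w := Nat.lt_succ_iff.mp (mem_range.mp hi)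
  obtain ⟨d, rfl⟩ := Nat.exists_eq_add_of_le hiw
  have e1 : i + d + 1 - (i + 1) = d := by omega
  have e2 : i + d + 1 - i = d + 1 := by omega
  have e3 : i + d - i = d := by omega
  have c1 : (((i + d + 1).choose (i + 1) : ℕ) : ℂ) * ((i : ℂ) + 1)
      = ((i : ℂ) + d + 1) * ((i + d).choose i : ℂ) := by
    exact_mod_cast (Nat.add_one_mul_choose_eq (i + d) i).symm
  have c2 : (((i + d + 1).choose i : ℕ) : ℂ) * ((d : ℂ) + 1)
      = ((i : ℂ) + d + 1) * ((i + d).choose i : ℂ) := by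
    have := Nat.choose_mul_succ_eq (i + d) i
    rw [e2] at this
    rw [mul_comm ((i : ℂ) + d + 1)]
    exact_mod_cast this.symm
  rw [e1, e2, e3]
  push_cast
  have x1 : ((i : ℂ) + 1) * A + d * B = i * A + d * B + A := by ring
  have x2 : (i : ℂ) * A + (d + 1) * B = i * A + d * B + B := by ring
  rw [x1, x2]
  generalize (i * A + d * B + A) ^ m = X
  generalize (i * A + d * B + B) ^ m = Y
  linear_combination (-(-1) ^ i * lam ^ d * A * X) * c1 + ((-1) ^ i * lam ^ (d + 1) * B * Y) * c2

theorem stmt_1 (a b : ℝ) (ha : 0 < a) (hb : 0 < b) (hab : a ≠ b) (lam : ℂ) (n v : ℕ)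
    (hn : 1 ≤ n) (hv : 1 ≤ v) :
    genStirling a b lam n v =
      ∑ j ∈ range n, ((n - 1).choose j : ℂ) * genStirling a b lam j (v - 1) *
        (lam * (Real.log b : ℂ) ^ (n - j) - (Real.log a : ℂ) ^ (n - j)) := by
  obtain ⟨m, rfl⟩ : ∃ m, n = m + 1 := ⟨n - 1, by omega⟩
  obtain ⟨w, rfl⟩ : ∃ w, v = w + 1 := ⟨v - 1, by omega⟩
  unfold genStirling
  generalize (Real.log a : ℂ) = A
  generalize (Real.log b : ℂ) = B
  rw [genStirling_succ_aux]
  simp only [Nat.add_sub_cancel]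
  have hw : ((w : ℂ) + 1) ≠ 0 := Nat.cast_add_one_ne_zero w
  have hf : (w.factorial : ℂ) ≠ 0 := Nat.cast_ne_zero.mpr w.factorial_ne_zero
  have hL : ∀ S : ℂ, 1 / ((w + 1).factorial : ℂ) * (((w : ℂ) + 1) * S)
      = 1 / (w.factorial : ℂ) * S := by
    intro S
    rw [Nat.factorial_succ]
    push_cast
    field_simp
  rw [hL]
  simp only [mul_sum, sum_mul]
  rw [sum_comm]
  refine sum_congr rfl fun i _ => ?_
  rw [add_pow, add_pow]
  simp only [mul_sum]
  rw [← sum_sub_distrib]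
  simp only [mul_sum]
  refine sum_congr rfl fun j hj => ?_
  have hjm : j ≤ m := Nat.lt_succ_iff.mp (mem_range.mp hj)
  rw [Nat.sub_add_comm hjm]
  ring
end

section
/- Let a, b be positive real numbers with a ≠ b, let λ ∈ ℂ, and let n, v ∈ ℕ with n ≥ 1 and v ≥ 1. Then S(n,v;a,b;λ) = v·(ln b)·S(n−1,v;a,b;λ) + ln(b/a)·Σ_{j=0}^{n−1} binom(n−1,j)·S(j,v−1;a,b;λ)·(ln a)^{n−1−j}. -/
open Finset

theorem stmt_2 (a b : ℝ) (ha : 0 < a) (hb : 0 < b) (hab : a ≠ b) (lam : ℂ) (n v : ℕ)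
    (hn : 1 ≤ n) (hv : 1 ≤ v) :
    genStirling a b lam n v =
      (v : ℂ) * (Real.log b : ℂ) * genStirling a b lam (n - 1) v +
        (Real.log (b / a) : ℂ) * ∑ j ∈ range n,
          ((n - 1).choose j : ℂ) * genStirling a b lam j (v - 1) *
            (Real.log a : ℂ) ^ (n - 1 - j) := by
  obtain ⟨m, rfl⟩ : ∃ m, n = m + 1 := ⟨n - 1, by omega⟩
  obtain ⟨w, rfl⟩ : ∃ w, v = w + 1 := ⟨v - 1, by omega⟩
  rw [Real.log_div hb.ne' ha.ne']
  simp only [Nat.add_sub_cancel, genStirling]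
  push_cast
  generalize (Real.log a : ℂ) = A
  generalize (Real.log b : ℂ) = B
  have hw : (w.factorial : ℂ) ≠ 0 := by exact_mod_cast w.factorial_ne_zero
  have hw1 : ((w : ℂ) + 1) ≠ 0 := by exact_mod_cast w.succ_ne_zero
  have h1 : ∑ j ∈ range (m + 1), (m.choose j : ℂ) * (1 / (w.factorial : ℂ) *
      ∑ i ∈ range (w + 1), (-1) ^ i * (w.choose i : ℂ) * lam ^ (w - i) *
        ((i : ℂ) * A + ((w - i : ℕ) : ℂ) * B) ^ j) * A ^ (m - j) =
      1 / (w.factorial : ℂ) * ∑ i ∈ range (w + 1), (-1) ^ i * (w.choose i : ℂ) * lam ^ (w - i) *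
        ((i : ℂ) * A + ((w - i : ℕ) : ℂ) * B + A) ^ m := by
    simp only [add_pow _ A m, mul_sum, sum_mul]
    rw [sum_comm]
    refine sum_congr rfl fun i _ => sum_congr rfl fun j _ => ?_
    ring
  have h2 : ∑ j ∈ range (w + 1 + 1), (-1) ^ j * ((w + 1).choose j : ℂ) * lam ^ (w + 1 - j) *
        ((j : ℂ) * A + ((w + 1 - j : ℕ) : ℂ) * B) ^ (m + 1) -
      ((w : ℂ) + 1) * B * ∑ j ∈ range (w + 1 + 1), (-1) ^ j * ((w + 1).choose j : ℂ) *
        lam ^ (w + 1 - j) * ((j : ℂ) * A + ((w + 1 - j : ℕ) : ℂ) * B) ^ m =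
      ((w : ℂ) + 1) * (B - A) * ∑ i ∈ range (w + 1), (-1) ^ i * (w.choose i : ℂ) *
        lam ^ (w - i) * ((i : ℂ) * A + ((w - i : ℕ) : ℂ) * B + A) ^ m := by
    rw [mul_sum, ← sum_sub_distrib, sum_range_succ', mul_sum]
    have h0 : ∀ x y : ℂ, y = 0 → x + y = x := fun x y h => by rw [h, add_zero]
    rw [h0]
    · refine sum_congr rfl fun i hi => ?_
      have hi' : i ≤ w := by simpa [Nat.lt_succ_iff] using hi
      have hc : ((w : ℂ) + 1) * (w.choose i : ℂ) = ((w + 1).choose (i + 1) : ℂ) * ((i : ℂ) + 1) := by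
        exact_mod_cast Nat.add_one_mul_choose_eq w i
      rw [Nat.add_sub_add_right, Nat.cast_sub hi']
      push_cast
      have hx : ((i : ℂ) + 1) * A + ((w : ℂ) - i) * B = (i : ℂ) * A + ((w : ℂ) - i) * B + A := by ring
      rw [hx, pow_succ _ m]
      linear_combination (-(-1) ^ i * lam ^ (w - i) * (B - A) *
        ((i : ℂ) * A + ((w : ℂ) - i) * B + A) ^ m) * hc
    · simp
      ring
  rw [h1, Nat.factorial_succ]
  push_cast
  rw [sub_eq_iff_eq_add] at h2
  rw [h2]
  field_simp
  ring
end

section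
/- Let a, b be positive real numbers with a ≠ b, let λ ∈ ℂ, and let m, x ∈ ℕ. Then λ^x·(x·ln b)^m = Σ_{l=0}^{m} Σ_{j=0}^{x} binom(m,l)·binom(x,j)·j!·S(l,j;a,b;λ)·((x−j)·ln a)^{m−l}. -/
open Finset

theorem fwd_aux (F : ℕ → ℂ) (x : ℕ) :
    F x = ∑ j ∈ range (x + 1), (x.choose j : ℂ) *
      ∑ i ∈ range (j + 1), (-1) ^ i * (j.choose i : ℂ) * F (j - i) := by
  have h := shift_eq_sum_fwdDiff_iter (1 : ℕ) F x 0
  simp only [smul_eq_mul, mul_one, zero_add, nsmul_eq_mul] at h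
  rw [h]
  refine Finset.sum_congr rfl fun j _ => ?_
  rw [fwdDiff_iter_eq_sum_shift, ← Finset.sum_range_reflect]
  congr 1
  refine Finset.sum_congr rfl fun i hi => ?_
  have hi' : i ≤ j := Nat.lt_succ_iff.mp (Finset.mem_range.mp hi)
  have e : j + 1 - 1 - i = j - i := by omega
  have e2 : j - (j - i) = i := by omega
  rw [e, e2, Nat.choose_symm hi']
  simp [zsmul_eq_mul]

theorem stmt_3 (a b : ℝ) (ha : 0 < a) (hb : 0 < b) (hab : a ≠ b) (lam : ℂ) (m x : ℕ) :
    lam ^ x * ((x : ℂ) * (Real.log b : ℂ)) ^ m =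
      ∑ l ∈ range (m + 1), ∑ j ∈ range (x + 1),
        (m.choose l : ℂ) * (x.choose j : ℂ) * (j.factorial : ℂ) *
          genStirling a b lam l j * (((x - j : ℕ) : ℂ) * (Real.log a : ℂ)) ^ (m - l) := by
  rw [Finset.sum_comm]
  have h := fwd_aux (fun k => lam ^ k * (((x - k : ℕ) : ℂ) * (Real.log a : ℂ)
    + (k : ℂ) * (Real.log b : ℂ)) ^ m) x
  simp only [Nat.sub_self, Nat.cast_zero, zero_mul, zero_add] at h
  rw [h]
  refine Finset.sum_congr rfl fun j hj => ?_
  have hj' : j ≤ x := Nat.lt_succ_iff.mp (Finset.mem_range.mp hj)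
  have hf : (j.factorial : ℂ) ≠ 0 := Nat.cast_ne_zero.mpr j.factorial_ne_zero
  have key : ∀ l, (j.factorial : ℂ) * genStirling a b lam l j =
      ∑ i ∈ range (j + 1), (-1) ^ i * (j.choose i : ℂ) * lam ^ (j - i) *
      ((i : ℂ) * (Real.log a : ℂ) + ((j - i : ℕ) : ℂ) * (Real.log b : ℂ)) ^ l := by
    intro l
    rw [genStirling, ← mul_assoc, mul_one_div_cancel hf, one_mul]
  have key2 : ∀ l, (m.choose l : ℂ) * (x.choose j : ℂ) * (j.factorial : ℂ) *
          genStirling a b lam l j * (((x - j : ℕ) : ℂ) * (Real.log a : ℂ)) ^ (m - l) =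
      ∑ i ∈ range (j + 1), (x.choose j : ℂ) * ((-1) ^ i * (j.choose i : ℂ) * lam ^ (j - i) *
      (((i : ℂ) * (Real.log a : ℂ) + ((j - i : ℕ) : ℂ) * (Real.log b : ℂ)) ^ l *
        (((x - j : ℕ) : ℂ) * (Real.log a : ℂ)) ^ (m - l) * (m.choose l : ℂ))) := by
    intro l
    rw [mul_assoc _ (j.factorial : ℂ), key, Finset.mul_sum, Finset.sum_mul]
    refine Finset.sum_congr rfl fun i _ => ?_
    ring
  simp only [key2]
  rw [Finset.sum_comm, Finset.mul_sum]
  refine Finset.sum_congr rfl fun i hi => ?_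
  have hi' : i ≤ j := Nat.lt_succ_iff.mp (Finset.mem_range.mp hi)
  rw [← Finset.mul_sum, ← Finset.mul_sum, ← add_pow]
  have e : x - (j - i) = (x - j) + i := by omega
  rw [e, Nat.cast_add]
  ring
end

section
/- Let a, b be positive real numbers with a ≠ b, let x ∈ ℝ, λ ∈ ℂ and n, v ∈ ℕ. Then S_v^n(x;a,b;λ) = Σ_{j=0}^{n} binom(n,j)·S(j,v;a,b;λ)·(x·ln b)^{n−j}. -/
open Finset

/-- The generalized array type polynomials. -/
noncomputable def arrayPoly (a b x : ℝ) (lam : ℂ) (n v : ℕ) : ℂ :=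
  (1 / (v.factorial : ℂ)) * ∑ j ∈ range (v + 1),
    (-1) ^ (v - j) * (v.choose j : ℂ) * lam ^ j *
      (((v - j : ℕ) : ℂ) * (Real.log a : ℂ) + ((x : ℂ) + (j : ℂ)) * (Real.log b : ℂ)) ^ n

theorem stmt_5 (a b : ℝ) (ha : 0 < a) (hb : 0 < b) (hab : a ≠ b) (x : ℝ) (lam : ℂ) (n v : ℕ) :
    arrayPoly a b x lam n v =
      ∑ j ∈ range (n + 1), (n.choose j : ℂ) * genStirling a b lam j v *
        ((x : ℂ) * (Real.log b : ℂ)) ^ (n - j) := by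
  unfold arrayPoly genStirling
  rw [← Finset.sum_range_reflect]
  simp only [Finset.mul_sum, Finset.sum_mul]
  rw [Finset.sum_comm]
  refine Finset.sum_congr rfl fun j hj => ?_
  have hj' : j ≤ v := Nat.lt_succ_iff.mp (Finset.mem_range.mp hj)
  have h1 : v + 1 - 1 - j = v - j := by omega
  have h2 : v - (v - j) = j := by omega
  rw [h1, h2, Nat.choose_symm hj']
  have h3 : (j : ℂ) * (Real.log a : ℂ) + ((x : ℂ) + ((v - j : ℕ) : ℂ)) * (Real.log b : ℂ)
      = ((j : ℂ) * (Real.log a : ℂ) + ((v - j : ℕ) : ℂ) * (Real.log b : ℂ))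
        + (x : ℂ) * (Real.log b : ℂ) := by ring
  rw [h3, add_pow]
  simp only [Finset.mul_sum]
  refine Finset.sum_congr rfl fun i _ => ?_
  ring
end

section
/- Let a, b be positive real numbers with a ≠ b, let λ ∈ ℂ, and let n, v, j ∈ ℕ with j ≤ n. Then the j-th iterated derivative of the function ℝ → ℂ given by x ↦ S_v^n(x;a,b;λ) equals the function x ↦ n·(n−1)⋯(n−j+1)·(ln b)^j·S_v^{n−j}(x;a,b;λ) (where n·(n−1)⋯(n−j+1) is the descending factorial with j factors). -/
open Finset

theorem arrayPoly_hasDerivAt (a b x : ℝ) (lam : ℂ) (n v : ℕ) :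
    HasDerivAt (fun x : ℝ => arrayPoly a b x lam n v)
      ((n : ℂ) * (Real.log b : ℂ) * arrayPoly a b x lam (n - 1) v) x := by
  unfold arrayPoly
  have key : ∀ j ∈ range (v + 1), HasDerivAt (fun x : ℝ =>
      (-1) ^ (v - j) * (v.choose j : ℂ) * lam ^ j *
      (((v - j : ℕ) : ℂ) * (Real.log a : ℂ) + ((x : ℂ) + (j : ℂ)) * (Real.log b : ℂ)) ^ n)
      ((-1) ^ (v - j) * (v.choose j : ℂ) * lam ^ j * ((n : ℂ) *
      (((v - j : ℕ) : ℂ) * (Real.log a : ℂ) + ((x : ℂ) + (j : ℂ)) * (Real.log b : ℂ)) ^ (n - 1)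
        * (1 * (Real.log b : ℂ)))) x := by
    intro j _
    have h0 : HasDerivAt (fun x : ℝ => (x : ℂ)) 1 x := Complex.ofRealCLM.hasDerivAt
    exact ((((h0.add_const (j : ℂ)).mul_const (Real.log b : ℂ)).const_add
      (((v - j : ℕ) : ℂ) * (Real.log a : ℂ))).fun_pow n).const_mul _
  refine ((HasDerivAt.fun_sum key).const_mul (1 / (v.factorial : ℂ))).congr_deriv ?_
  simp only [Finset.mul_sum]
  refine Finset.sum_congr rfl fun j _ => ?_
  ring

theorem stmt_6 (a b : ℝ) (ha : 0 < a) (hb : 0 < b) (hab : a ≠ b) (lam : ℂ) (n v j : ℕ)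
    (hj : j ≤ n) :
    iteratedDeriv j (fun x : ℝ => arrayPoly a b x lam n v) =
      fun x : ℝ => (n.descFactorial j : ℂ) * (Real.log b : ℂ) ^ j *
        arrayPoly a b x lam (n - j) v := by
  clear hj
  induction j with
  | zero => simp
  | succ j ih =>
    rw [iteratedDeriv_succ, ih]
    funext x
    rw [((arrayPoly_hasDerivAt a b x lam (n - j) v).const_mul _).deriv,
      Nat.descFactorial_succ, Nat.sub_sub]
    push_cast
    ring
end

section
/- Let a, b be positive real numbers with a ≠ b, let x₁, x₂ ∈ ℝ, λ ∈ ℂ and n, v₁, v₂ ∈ ℕ. Then binom(v₁+v₂, v₁)·S_{v₁+v₂}^n(x₁+x₂;a,b;λ) = Σ_{j=0}^{n} binom(n,j)·S_{v₁}^j(x₁;a,b;λ)·S_{v₂}^{n−j}(x₂;a,b;λ). -/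
open Finset

theorem array_F_succ (v : ℕ) (G : ℕ → ℂ) :
    ∑ i ∈ range (v + 1 + 1), ((v + 1).choose i : ℂ) * G i =
      ∑ i ∈ range (v + 1), (v.choose i : ℂ) * G i +
      ∑ i ∈ range (v + 1), (v.choose i : ℂ) * G (i + 1) := by
  rw [sum_range_succ']
  have h : ∑ i ∈ range (v + 1), (v.choose i : ℂ) * G i =
      ∑ i ∈ range (v + 1), (v.choose (i + 1) : ℂ) * G (i + 1) + G 0 := by
    have := sum_range_succ (fun i => (v.choose i : ℂ) * G i) (v + 1)
    rw [sum_range_succ'] at this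
    simp at this
    rw [← this]
  rw [h]
  simp only [Nat.choose_succ_succ', Nat.cast_add, add_mul, sum_add_distrib]
  simp
  ring

theorem array_F_conv (w : ℕ) (v : ℕ) : ∀ G : ℕ → ℂ,
    ∑ i ∈ range (v + 1), (v.choose i : ℂ) * ∑ k ∈ range (w + 1), (w.choose k : ℂ) * G (i + k) =
      ∑ m ∈ range (v + w + 1), ((v + w).choose m : ℂ) * G m := by
  induction v with
  | zero => intro G; simp
  | succ v ih =>
    intro G
    rw [array_F_succ v (fun i => ∑ k ∈ range (w + 1), (w.choose k : ℂ) * G (i + k)), ih G,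
      show v + 1 + w = v + w + 1 by ring, array_F_succ, ← ih (fun m => G (m + 1))]
    simp only [add_right_comm]

theorem stmt_7 (a b : ℝ) (ha : 0 < a) (hb : 0 < b) (hab : a ≠ b) (x₁ x₂ : ℝ) (lam : ℂ)
    (n v₁ v₂ : ℕ) :
    ((v₁ + v₂).choose v₁ : ℂ) * arrayPoly a b (x₁ + x₂) lam n (v₁ + v₂) =
      ∑ j ∈ range (n + 1), (n.choose j : ℂ) * arrayPoly a b x₁ lam j v₁ *
        arrayPoly a b x₂ lam (n - j) v₂ := by
  have h1 := array_F_conv v₂ v₁ (fun m => (-1) ^ (v₁ + v₂ - m) * lam ^ m *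
      (((v₁ + v₂ - m : ℕ) : ℂ) * (Real.log a : ℂ) +
        (((x₁ + x₂ : ℝ) : ℂ) + (m : ℂ)) * (Real.log b : ℂ)) ^ n)
  have hc : ((v₁ + v₂).choose v₁ : ℂ) * (1 / ((v₁ + v₂).factorial : ℂ)) =
      1 / (v₁.factorial : ℂ) * (1 / (v₂.factorial : ℂ)) := by
    have h := Nat.add_choose_mul_factorial_mul_factorial v₁ v₂
    rw [← Nat.choose_symm_add] at h
    have h' : ((v₁ + v₂).choose v₁ : ℂ) * v₁.factorial * v₂.factorial =
      (v₁ + v₂).factorial := by exact_mod_cast h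
    have e1 : (v₁.factorial : ℂ) ≠ 0 := by exact_mod_cast v₁.factorial_ne_zero
    have e2 : (v₂.factorial : ℂ) ≠ 0 := by exact_mod_cast v₂.factorial_ne_zero
    have e3 : ((v₁ + v₂).factorial : ℂ) ≠ 0 := by exact_mod_cast (v₁ + v₂).factorial_ne_zero
    field_simp
    rw [← h']
  have hL : ((v₁ + v₂).choose v₁ : ℂ) * arrayPoly a b (x₁ + x₂) lam n (v₁ + v₂) =
      1 / (v₁.factorial : ℂ) * (1 / (v₂.factorial : ℂ)) *
      ∑ m ∈ range (v₁ + v₂ + 1), ((v₁ + v₂).choose m : ℂ) * ((-1) ^ (v₁ + v₂ - m) * lam ^ m *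
      (((v₁ + v₂ - m : ℕ) : ℂ) * (Real.log a : ℂ) +
        (((x₁ + x₂ : ℝ) : ℂ) + (m : ℂ)) * (Real.log b : ℂ)) ^ n) := by
    rw [arrayPoly, ← mul_assoc, hc]
    congr 1
    refine sum_congr rfl fun m _ => ?_
    ring
  rw [hL, ← h1]
  have hR : ∀ j, (n.choose j : ℂ) * arrayPoly a b x₁ lam j v₁ * arrayPoly a b x₂ lam (n - j) v₂ =
      1 / (v₁.factorial : ℂ) * (1 / (v₂.factorial : ℂ)) *
      ∑ i ∈ range (v₁ + 1), ∑ k ∈ range (v₂ + 1), (v₁.choose i : ℂ) * (v₂.choose k : ℂ) *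
        ((-1) ^ (v₁ - i) * (-1) ^ (v₂ - k) * lam ^ (i + k)) *
        ((((v₁ - i : ℕ) : ℂ) * (Real.log a : ℂ) + ((x₁ : ℂ) + (i : ℂ)) * (Real.log b : ℂ)) ^ j *
        (((v₂ - k : ℕ) : ℂ) * (Real.log a : ℂ) + ((x₂ : ℂ) + (k : ℂ)) * (Real.log b : ℂ)) ^ (n - j)
          * (n.choose j : ℂ)) := by
    intro j
    rw [arrayPoly, arrayPoly]
    rw [show ∀ c p s q t : ℂ, c * (p * s) * (q * t) = p * q * (c * (s * t)) by intros; ring,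
      sum_mul_sum, mul_sum]
    congr 1
    refine sum_congr rfl fun i _ => ?_
    rw [mul_sum]
    refine sum_congr rfl fun k _ => ?_
    rw [pow_add]
    ring
  rw [sum_congr rfl fun j _ => hR j, ← mul_sum]
  congr 1
  rw [sum_comm]
  refine sum_congr rfl fun i hi => ?_
  rw [sum_comm, mul_sum]
  refine sum_congr rfl fun k hk => ?_
  rw [← mul_sum, ← add_pow]
  have hi' : i ≤ v₁ := by simpa [Nat.lt_succ_iff] using hi
  have hk' : k ≤ v₂ := by simpa [Nat.lt_succ_iff] using hk
  rw [show v₁ + v₂ - (i + k) = (v₁ - i) + (v₂ - k) by omega, ← pow_add]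
  push_cast
  simp only [← mul_assoc]
  congr 2
  ring
end
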